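/- arXiv:1903.12154 — 2 statements merged into one kernel-verified Lean document; each statement's English description precedes it below -/
import Mathlib

section
/- Secrecy and correctness imply security: for every cc-d distribution P, D_NS(P, P^ideal) <= Pr[S_A != S_B] + D_NS^A(P, P^ideal). -/
/-- A classical-classical-device (cc-d) distribution over `S_A = S_B = K`, `Q`, `E`
with Eve's input set `Z`: nonnegative, normalized for each `z`, and non-signaling
from Eve's input to the classical part. -/
def IsCCD {K Q E Z : Type} [Fintype K] [Fintype Q] [Fintype E]
    (P : K → K → Q → E → Z → ℝ) : Prop :=
  (∀ sA sB q e z, 0 ≤ P sA sB q e z) ∧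
  (∀ z, ∑ sA, ∑ sB, ∑ q, ∑ e, P sA sB q e z = 1) ∧
  (∀ sA sB q z z', ∑ e, P sA sB q e z = ∑ e, P sA sB q e z')

/-- The NS distance between two cc-d distributions. -/
noncomputable def dNS {K Q E Z : Type} [Fintype K] [Fintype Q] [Fintype E] [Fintype Z]
    [Nonempty Z] (P R : K → K → Q → E → Z → ℝ) : ℝ :=
  (1/2) * ∑ sA, ∑ sB, ∑ q, Finset.univ.sup' Finset.univ_nonempty
    (fun z => ∑ e, |P sA sB q e z - R sA sB q e z|)

/-- The Alice–Eve marginal NS distance between two cc-d distributions. -/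
noncomputable def dNSA {K Q E Z : Type} [Fintype K] [Fintype Q] [Fintype E] [Fintype Z]
    [Nonempty Z] (P R : K → K → Q → E → Z → ℝ) : ℝ :=
  (1/2) * ∑ sA, ∑ q, Finset.univ.sup' Finset.univ_nonempty
    (fun z => ∑ e, |(∑ sB, P sA sB q e z) - (∑ sB, R sA sB q e z)|)

/-- The intermediate state of a cc-d distribution: perfectly correlated keys with the
distribution of Alice's key. -/
noncomputable def interState {K Q E Z : Type} [Fintype K] [DecidableEq K]
    (P : K → K → Q → E → Z → ℝ) : K → K → Q → E → Z → ℝ :=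
  fun sA sB q e z => if sA = sB then ∑ s', P sA s' q e z else 0

/-- The ideal state of a cc-d distribution: uniform perfectly correlated keys,
product with Eve's (and the communication) system. -/
noncomputable def idealState {K Q E Z : Type} [Fintype K] [DecidableEq K]
    (P : K → K → Q → E → Z → ℝ) : K → K → Q → E → Z → ℝ :=
  fun sA sB q e z =>
    (if sA = sB then (1 : ℝ) / (Fintype.card K) else 0) * ∑ sA', ∑ sB', P sA' sB' q e z

/-- The probability that the two key strings differ (computed at Eve's input `z`;
by non-signaling this does not depend on `z`). -/
noncomputable def errProb {K Q E Z : Type} [Fintype K] [Fintype Q] [Fintype E] [DecidableEq K]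
    (P : K → K → Q → E → Z → ℝ) (z : Z) : ℝ :=
  ∑ sA, ∑ sB, ∑ q, ∑ e, if sA = sB then (0 : ℝ) else P sA sB q e z

/-!
Insert the state in which Bob's key is replaced by a copy of Alice's (`interState`). It is at NS
distance exactly `Pr[S_A ≠ S_B]` from `P`: the mass `P` puts on unequal keys is counted once where
it is removed and once where it reappears on the diagonal, which the factor `1/2` compensates, and
non-signaling makes this mass the same for all of Eve's inputs. Between two states with equal keys
nothing is lost by discarding Bob's key, so the distance from `interState` to the ideal state is the
Alice–Eve marginal distance. Conclude by the triangle inequality.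
-/

open Finset

section NSNorm

variable {E Z : Type*} [Fintype E] [Fintype Z] [Nonempty Z]

/-- The norm on families of functions of Eve's outcome `e`, indexed by her input `z`, whose induced
distance is the contribution of one classical value `(s_A, s_B, q)` to the NS distance: the `ℓ¹`
norm in `e`, maximised over `z`. -/
noncomputable def nsNorm (f : E → Z → ℝ) : ℝ :=
  univ.sup' univ_nonempty fun z => ∑ e, |f e z|

theorem nsNorm_add_le (f g : E → Z → ℝ) : nsNorm (f + g) ≤ nsNorm f + nsNorm g := by
  refine sup'_le _ _ fun z _ => ?_
  calc ∑ e, |f e z + g e z| ≤ ∑ e, (|f e z| + |g e z|) := sum_le_sum fun e _ => abs_add_le _ _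
    _ = ∑ e, |f e z| + ∑ e, |g e z| := sum_add_distrib
    _ ≤ nsNorm f + nsNorm g :=
      add_le_add (le_sup' (fun z => ∑ e, |f e z|) (mem_univ z))
        (le_sup' (fun z => ∑ e, |g e z|) (mem_univ z))

theorem nsNorm_eq_of_forall_sum_abs_eq {f : E → Z → ℝ} {c : ℝ} (hf : ∀ z, ∑ e, |f e z| = c) :
    nsNorm f = c := by
  simp only [nsNorm, hf, sup'_const]

theorem nsNorm_eq_sum_of_nonneg {f : E → Z → ℝ} (hf : ∀ e z, 0 ≤ f e z)
    (hns : ∀ z z', ∑ e, f e z = ∑ e, f e z') (z : Z) : nsNorm f = ∑ e, f e z :=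
  nsNorm_eq_of_forall_sum_abs_eq fun z' => by simp only [abs_of_nonneg (hf _ _), hns z' z]

theorem nsNorm_neg (f : E → Z → ℝ) : nsNorm (-f) = nsNorm f := by
  simp only [nsNorm, Pi.neg_apply, abs_neg]

theorem nsNorm_zero : nsNorm (0 : E → Z → ℝ) = 0 :=
  nsNorm_eq_of_forall_sum_abs_eq fun z => by simp

end NSNorm

section Distance

variable {K Q E Z : Type} [Fintype K] [Fintype Q] [Fintype E] [Fintype Z] [Nonempty Z]

theorem dNS_eq_sum_nsNorm (P R : K → K → Q → E → Z → ℝ) :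
    dNS P R = 1 / 2 * ∑ sA, ∑ sB, ∑ q, nsNorm (P sA sB q - R sA sB q) :=
  rfl

theorem dNSA_eq_sum_nsNorm (P R : K → K → Q → E → Z → ℝ) :
    dNSA P R = 1 / 2 * ∑ sA, ∑ q, nsNorm (∑ sB, P sA sB q - ∑ sB, R sA sB q) := by
  simp only [dNSA, nsNorm, Pi.sub_apply, Finset.sum_apply]

theorem dNS_triangle (P R S : K → K → Q → E → Z → ℝ) : dNS P S ≤ dNS P R + dNS R S := by
  simp only [dNS_eq_sum_nsNorm, ← mul_add, ← sum_add_distrib]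
  gcongr with sA _ sB _ q
  simpa only [sub_add_sub_cancel] using
    nsNorm_add_le (P sA sB q - R sA sB q) (R sA sB q - S sA sB q)

end Distance

section EqualKeys

variable {K Q E Z : Type} [Fintype K] [DecidableEq K]

theorem interState_self (P : K → K → Q → E → Z → ℝ) (s : K) (q : Q) :
    interState P s s q = ∑ sB, P s sB q := by
  ext e z
  simp only [interState, if_true, Finset.sum_apply]

theorem interState_of_ne (P : K → K → Q → E → Z → ℝ) {sA sB : K} (h : sA ≠ sB) (q : Q) :
    interState P sA sB q = 0 := by
  ext e z
  simp only [interState, if_neg h, Pi.zero_apply]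

theorem idealState_of_ne (P : K → K → Q → E → Z → ℝ) {sA sB : K} (h : sA ≠ sB) (q : Q) :
    idealState P sA sB q = 0 := by
  ext e z
  simp only [idealState, if_neg h, zero_mul, Pi.zero_apply]

theorem errProb_eq_sum_erase [Fintype Q] [Fintype E] (P : K → K → Q → E → Z → ℝ) (z : Z) :
    errProb P z = ∑ sA, ∑ sB ∈ univ.erase sA, ∑ q, ∑ e, P sA sB q e z := by
  refine sum_congr rfl fun sA _ => ?_
  rw [← add_sum_erase _ _ (mem_univ sA)]
  simp only [if_true, sum_const_zero, zero_add]
  refine sum_congr rfl fun sB hsB => ?_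
  simp only [if_neg (ne_of_mem_erase hsB).symm]

variable [Fintype E] [Fintype Z] [Nonempty Z]

theorem nsNorm_sub_interState_of_ne {P : K → K → Q → E → Z → ℝ} {sA sB : K} (h : sA ≠ sB) {q : Q}
    (hnonneg : ∀ e z, 0 ≤ P sA sB q e z)
    (hns : ∀ z z', ∑ e, P sA sB q e z = ∑ e, P sA sB q e z') (z : Z) :
    nsNorm (P sA sB q - interState P sA sB q) = ∑ e, P sA sB q e z := by
  rw [interState_of_ne P h, sub_zero, nsNorm_eq_sum_of_nonneg hnonneg hns z]

theorem nsNorm_sub_interState_self {P : K → K → Q → E → Z → ℝ} {s : K} {q : Q}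
    (hnonneg : ∀ sB, s ≠ sB → ∀ e z, 0 ≤ P s sB q e z)
    (hns : ∀ sB, s ≠ sB → ∀ z z', ∑ e, P s sB q e z = ∑ e, P s sB q e z') (z : Z) :
    nsNorm (P s s q - interState P s s q) = ∑ sB ∈ univ.erase s, ∑ e, P s sB q e z := by
  have hdiff : P s s q - interState P s s q = -∑ sB ∈ univ.erase s, P s sB q := by
    rw [interState_self, ← add_sum_erase _ _ (mem_univ s), sub_add_cancel_left]
  have hsum (z : Z) : ∑ e, (∑ sB ∈ univ.erase s, P s sB q) e z =
      ∑ sB ∈ univ.erase s, ∑ e, P s sB q e z := by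
    simp only [Finset.sum_apply]
    exact sum_comm
  rw [hdiff, nsNorm_neg, nsNorm_eq_sum_of_nonneg _ _ z, hsum]
  · intro e z
    simp only [Finset.sum_apply]
    exact sum_nonneg fun sB hsB => hnonneg sB (ne_of_mem_erase hsB).symm e z
  · intro z z'
    rw [hsum, hsum]
    exact sum_congr rfl fun sB hsB => hns sB (ne_of_mem_erase hsB).symm z z'

variable [Fintype Q]

theorem dNS_interState_eq_errProb {P : K → K → Q → E → Z → ℝ}
    (hnonneg : Pairwise fun sA sB => ∀ q e z, 0 ≤ P sA sB q e z)
    (hns : Pairwise fun sA sB => ∀ q z z', ∑ e, P sA sB q e z = ∑ e, P sA sB q e z') (z : Z) :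
    dNS P (interState P) = errProb P z := by
  have hrow (sA : K) : ∑ sB, ∑ q, nsNorm (P sA sB q - interState P sA sB q) =
      2 * ∑ sB ∈ univ.erase sA, ∑ q, ∑ e, P sA sB q e z := by
    have hdiag : ∑ q, nsNorm (P sA sA q - interState P sA sA q) =
        ∑ sB ∈ univ.erase sA, ∑ q, ∑ e, P sA sB q e z := by
      rw [sum_comm]
      exact sum_congr rfl fun q _ =>
        nsNorm_sub_interState_self (fun _ h => hnonneg h q) (fun _ h => hns h q) z
    have hoff : ∑ sB ∈ univ.erase sA, ∑ q, nsNorm (P sA sB q - interState P sA sB q) =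
        ∑ sB ∈ univ.erase sA, ∑ q, ∑ e, P sA sB q e z := by
      refine sum_congr rfl fun sB hsB => sum_congr rfl fun q _ => ?_
      have h : sA ≠ sB := (ne_of_mem_erase hsB).symm
      exact nsNorm_sub_interState_of_ne h (hnonneg h q) (hns h q) z
    rw [← add_sum_erase _ _ (mem_univ sA), hdiag, hoff, two_mul]
  rw [dNS_eq_sum_nsNorm, errProb_eq_sum_erase]
  simp only [hrow, ← mul_sum]
  ring

theorem dNS_interState_eq_dNSA (P : K → K → Q → E → Z → ℝ) {R : K → K → Q → E → Z → ℝ}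
    (hR : Pairwise fun sA sB => ∀ q, R sA sB q = 0) :
    dNS (interState P) R = dNSA P R := by
  rw [dNS_eq_sum_nsNorm, dNSA_eq_sum_nsNorm]
  congr! 2 with sA
  have hmarginal (q : Q) : ∑ sB, R sA sB q = R sA sA q :=
    sum_eq_single_of_mem sA (mem_univ sA) fun _ _ h => hR h.symm q
  rw [sum_eq_single_of_mem sA (mem_univ sA) fun sB _ h => ?_]
  · simp only [interState_self, hmarginal]
  · simp only [interState_of_ne P h.symm, hR h.symm, sub_zero, nsNorm_zero, sum_const_zero]

theorem secrecy_and_correctness_imply_security_general {P R : K → K → Q → E → Z → ℝ}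
    (hnonneg : Pairwise fun sA sB => ∀ q e z, 0 ≤ P sA sB q e z)
    (hns : Pairwise fun sA sB => ∀ q z z', ∑ e, P sA sB q e z = ∑ e, P sA sB q e z')
    (hR : Pairwise fun sA sB => ∀ q, R sA sB q = 0) (z : Z) :
    dNS P R ≤ errProb P z + dNSA P R :=
  calc dNS P R ≤ dNS P (interState P) + dNS (interState P) R := dNS_triangle P (interState P) R
    _ = errProb P z + dNSA P R := by
      rw [dNS_interState_eq_errProb hnonneg hns z, dNS_interState_eq_dNSA P hR]

end EqualKeys

/-- Secrecy and correctness imply security: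
`D_NS(P, P^ideal) ≤ Pr[S_A ≠ S_B] + D_NS^A(P, P^ideal)`. -/
theorem secrecy_and_correctness_imply_security {K Q E Z : Type} [Fintype K] [Fintype Q]
    [Fintype E] [Fintype Z] [Nonempty K] [Nonempty Z] [DecidableEq K]
    (P : K → K → Q → E → Z → ℝ) (hP : IsCCD P) (z : Z) :
    dNS P (idealState P) ≤ errProb P z + dNSA P (idealState P) := by
  obtain ⟨hnonneg, -, hns⟩ := hP
  exact secrecy_and_correctness_imply_security_general (fun sA sB _ => hnonneg sA sB)
    (fun sA sB _ => hns sA sB) (fun _ _ h => idealState_of_ne P h) z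
end

section
/- Monotonicity under GMDLOPC operations: for every bipartite non-signaling device P over finite sets A, B, X, Y and every GMDLOPC operation Omega (specified by a local dice and a local post-processing as in the context), the output Omega(P) is again a bipartite non-signaling device (over A', B', X', Y'), and N_sq(Omega(P)) <= N_sq(P). -/
/-- Shannon entropy (base-2) of a finitely supported real-valued distribution. -/
noncomputable def shannonEnt {α : Type} [Fintype α] (p : α → ℝ) : ℝ :=
  -∑ a, p a * Real.logb 2 (p a)

/-- Shannon mutual information (base-2) of a joint distribution on `α × β`. -/
noncomputable def mutInfo {α β : Type} [Fintype α] [Fintype β] (R : α → β → ℝ) : ℝ :=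
  shannonEnt (fun a => ∑ b, R a b) + shannonEnt (fun b => ∑ a, R a b) -
    shannonEnt (fun p : α × β => R p.1 p.2)

/-- A bipartite non-signaling device over finite output sets `A`, `B` and input
sets `X`, `Y`. -/
def IsDevice {A B X Y : Type} [Fintype A] [Fintype B] (P : A → B → X → Y → ℝ) : Prop :=
  (∀ a b x y, 0 ≤ P a b x y) ∧
  (∀ x y, ∑ a, ∑ b, P a b x y = 1) ∧
  (∀ a x y y', ∑ b, P a b x y = ∑ b, P a b x y') ∧
  (∀ b y x x', ∑ a, P a b x y = ∑ a, P a b x' y)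

/-- The set of values `∑_e p_e · I(A:B)_{P_e(·,·|x,y)}` over all (finite) ensembles
`{(p_e, P_e)}` of the device `P` into non-signaling devices. -/
def NsqSet {A B X Y : Type} [Fintype A] [Fintype B]
    (P : A → B → X → Y → ℝ) (x : X) (y : Y) : Set ℝ :=
  { r | ∃ (n : ℕ) (p : Fin n → ℝ) (Pe : Fin n → A → B → X → Y → ℝ),
      (∀ i, 0 ≤ p i) ∧ (∑ i, p i = 1) ∧ (∀ i, IsDevice (Pe i)) ∧
      (∀ a b x' y', ∑ i, p i * Pe i a b x' y' = P a b x' y') ∧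
      r = ∑ i, p i * mutInfo (fun a b => Pe i a b x y) }

/-- The squashed non-locality of a bipartite device: the maximum over inputs `(x,y)` of
the infimum over ensembles of the averaged mutual information at fixed inputs. -/
noncomputable def Nsq {A B X Y : Type} [Fintype A] [Fintype B] [Fintype X] [Fintype Y]
    [Nonempty X] [Nonempty Y] (P : A → B → X → Y → ℝ) : ℝ :=
  Finset.univ.sup' Finset.univ_nonempty (fun xy : X × Y => sInf (NsqSet P xy.1 xy.2))

/-- A local device, i.e. one admitting a local hidden variable model. -/
def IsLocalDevice {A B X Y : Type} [Fintype A] [Fintype B] (P : A → B → X → Y → ℝ) : Prop :=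
  ∃ (n : ℕ) (mu : Fin n → ℝ) (LA : A → X → Fin n → ℝ) (LB : B → Y → Fin n → ℝ),
    (∀ i, 0 ≤ mu i) ∧ (∑ i, mu i = 1) ∧
    (∀ a x i, 0 ≤ LA a x i) ∧ (∀ x i, ∑ a, LA a x i = 1) ∧
    (∀ b y i, 0 ≤ LB b y i) ∧ (∀ y i, ∑ b, LB b y i = 1) ∧
    (∀ a b x y, P a b x y = ∑ i, mu i * LA a x i * LB b y i)

/-- The output device of a GMDLOPC operation, specified by a local dice
`D(x,y|x',y') = ∑_{λ₁} μ(λ₁) D1(x|x',λ₁) D2(y|y',λ₁)` and a local post-processing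
`PC(a',b'|a,b,x,y) = ∑_{λ₂} ν(λ₂) PC1(a'|a,x,λ₂) PC2(b'|b,y,λ₂)`. -/
noncomputable def GMDLOPCout {A B X Y A' B' X' Y' : Type} [Fintype A] [Fintype B]
    [Fintype X] [Fintype Y] {n1 n2 : ℕ}
    (P : A → B → X → Y → ℝ)
    (mu : Fin n1 → ℝ) (nu : Fin n2 → ℝ)
    (D1 : X → X' → Fin n1 → ℝ) (D2 : Y → Y' → Fin n1 → ℝ)
    (PC1 : A' → A → X → Fin n2 → ℝ) (PC2 : B' → B → Y → Fin n2 → ℝ) :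
    A' → B' → X' → Y' → ℝ :=
  fun a' b' x' y' => ∑ x, ∑ y, (∑ l1, mu l1 * D1 x x' l1 * D2 y y' l1) *
    ∑ a, ∑ b, P a b x y * (∑ l2, nu l2 * PC1 a' a x l2 * PC2 b' b y l2)

/-!
A GMDLOPC operation is a convex combination of two elementary kinds of operation: letting each
party send its output through a channel chosen by its own input, and relabelling each party's
input by a function. The dice become relabellings because a channel is a mixture of deterministic
maps: draw the images of all points independently.

Neither elementary operation increases `Nsq`. Both map an ensemble of the device to an ensemble of
its image, relabelling leaves the distributions at fixed inputs alone, and local channels can only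
decrease their mutual information, by the data processing inequality. Finally `Nsq` is convex on
devices, since ensembles of the components of a mixture combine into an ensemble of the mixture, so
its sublevel sets are convex.
-/

open Finset

/-! ### Channels and the data processing inequality -/

section Channels

variable {α β γ δ : Type*}

theorem sum_mul_log_sum_div_sum_le {ι : Type*} {s : Finset ι} {w u v : ι → ℝ}
    (hw : ∀ i ∈ s, 0 ≤ w i) (hu : ∀ i ∈ s, 0 ≤ u i) (hv : ∀ i ∈ s, 0 ≤ v i)
    (huv : ∀ i ∈ s, v i = 0 → u i = 0) :
    (∑ i ∈ s, w i * u i) * Real.log ((∑ i ∈ s, w i * u i) / ∑ i ∈ s, w i * v i) ≤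
      ∑ i ∈ s, w i * (u i * Real.log (u i / v i)) := by
  have hwv : ∀ i ∈ s, 0 ≤ w i * v i := fun i hi => mul_nonneg (hw i hi) (hv i hi)
  have cancel_v : ∀ i ∈ s, w i * v i * (u i / v i) = w i * u i := fun i hi => by
    rw [mul_assoc, mul_div_cancel_of_imp' (huv i hi)]
  have cancel_v_log : ∀ i ∈ s, w i * v i * (u i / v i * Real.log (u i / v i)) =
      w i * (u i * Real.log (u i / v i)) := fun i hi => by
    rw [← mul_assoc, cancel_v i hi, mul_assoc]
  rcases (sum_nonneg hwv).eq_or_lt with hV | hV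
  · have hwv0 := (sum_eq_zero_iff_of_nonneg hwv).1 hV.symm
    have hwu0 : ∀ i ∈ s, w i * u i = 0 := fun i hi => by
      rw [← cancel_v i hi, hwv0 i hi, zero_mul]
    rw [sum_eq_zero hwu0, zero_mul,
      sum_eq_zero fun i hi => by rw [← mul_assoc, hwu0 i hi, zero_mul]]
  -- Jensen's inequality for `t ↦ t * log t` at the points `u i / v i` with weights `w i * v i`
  have jensen := Real.convexOn_mul_log.map_centerMass_le hwv hV
    (fun i hi => Set.mem_Ici.2 (div_nonneg (hu i hi) (hv i hi)))
  simp only [centerMass, smul_eq_mul, Function.comp_apply] at jensen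
  rwa [sum_congr rfl cancel_v, sum_congr rfl cancel_v_log, mul_assoc,
    mul_le_mul_iff_right₀ (inv_pos.2 hV), inv_mul_eq_div] at jensen

/-- A stochastic map `c(b|a)`. As in `GMDLOPCout`, the output is the first argument. -/
def IsChannel [Fintype β] (c : β → α → ℝ) : Prop :=
  (∀ b a, 0 ≤ c b a) ∧ ∀ a, ∑ b, c b a = 1

/-- The joint distribution of the outputs when the two components of `R` are sent independently
through `c` and `d`. -/
def applyChannels [Fintype α] [Fintype β] (R : α → β → ℝ) (c : γ → α → ℝ) (d : δ → β → ℝ) :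
    γ → δ → ℝ :=
  fun a' b' => ∑ a, ∑ b, R a b * c a' a * d b' b

theorem applyChannels_swap [Fintype α] [Fintype β] (R : α → β → ℝ) (c : γ → α → ℝ)
    (d : δ → β → ℝ) (a' : γ) (b' : δ) :
    applyChannels R c d a' b' = applyChannels (fun b a => R a b) d c b' a' := by
  unfold applyChannels
  rw [sum_comm]
  simp only [mul_right_comm]

theorem sum_applyChannels_right [Fintype α] [Fintype β] [Fintype δ] (R : α → β → ℝ)
    (c : γ → α → ℝ) {d : δ → β → ℝ} (hd : IsChannel d) (a' : γ) :
    ∑ b', applyChannels R c d a' b' = ∑ a, c a' a * ∑ b, R a b := by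
  unfold applyChannels
  rw [sum_comm]
  refine sum_congr rfl fun a _ => ?_
  rw [sum_comm]
  simp only [← mul_sum, hd.2, mul_one]
  rw [← sum_mul, mul_comm]

theorem sum_applyChannels_left [Fintype α] [Fintype β] [Fintype γ] (R : α → β → ℝ)
    {c : γ → α → ℝ} (hc : IsChannel c) (d : δ → β → ℝ) (b' : δ) :
    ∑ a', applyChannels R c d a' b' = ∑ b, d b' b * ∑ a, R a b := by
  simp only [applyChannels_swap R, sum_applyChannels_right _ d hc]

theorem sum_sum_applyChannels [Fintype α] [Fintype β] [Fintype γ] [Fintype δ] (R : α → β → ℝ)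
    {c : γ → α → ℝ} (hc : IsChannel c) {d : δ → β → ℝ} (hd : IsChannel d) :
    ∑ a', ∑ b', applyChannels R c d a' b' = ∑ a, ∑ b, R a b := by
  simp only [sum_applyChannels_right R c hd]
  rw [sum_comm]
  simp only [← sum_mul, hc.2, one_mul]

theorem applyChannels_nonneg [Fintype α] [Fintype β] [Fintype γ] [Fintype δ] {R : α → β → ℝ}
    (hR : ∀ a b, 0 ≤ R a b) {c : γ → α → ℝ} (hc : IsChannel c) {d : δ → β → ℝ}
    (hd : IsChannel d) (a' : γ) (b' : δ) : 0 ≤ applyChannels R c d a' b' :=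
  sum_nonneg fun a _ => sum_nonneg fun b _ =>
    mul_nonneg (mul_nonneg (hR a b) (hc.1 a' a)) (hd.1 b' b)

theorem sum_mul_applyChannels {ι : Type*} [Fintype ι] [Fintype α] [Fintype β] (p : ι → ℝ)
    (R : ι → α → β → ℝ) (c : γ → α → ℝ) (d : δ → β → ℝ) (a' : γ) (b' : δ) :
    ∑ i, p i * applyChannels (R i) c d a' b' =
      applyChannels (fun a b => ∑ i, p i * R i a b) c d a' b' := by
  simp only [applyChannels, mul_sum, sum_mul]
  rw [sum_comm]
  refine sum_congr rfl fun a _ => ?_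
  rw [sum_comm]
  simp only [mul_assoc]

theorem IsChannel.sum_prod_mul_apply [Fintype α] [DecidableEq α] [Fintype β] {d : β → α → ℝ}
    (hd : IsChannel d) (φ : β → ℝ) (a : α) :
    ∑ f : α → β, (∏ u, d (f u) u) * φ (f a) = ∑ b, d b a * φ b := by
  calc ∑ f : α → β, (∏ u, d (f u) u) * φ (f a)
      = ∑ f : α → β, ∏ u, d (f u) u * (if u = a then φ (f u) else 1) := by
        simp only [prod_mul_distrib, prod_ite_eq', mem_univ, if_true]
    _ = ∏ u, ∑ b, d b u * (if u = a then φ b else 1) := by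
        rw [prod_univ_sum, Fintype.piFinset_univ]
    _ = ∑ b, d b a * φ b := by
        rw [prod_eq_single a (fun u _ hu => by simp only [if_neg hu, mul_one, hd.2])
          (fun ha => absurd (mem_univ a) ha)]
        simp only [if_true]

theorem IsChannel.sum_prod_eq_one [Fintype α] [DecidableEq α] [Fintype β] {d : β → α → ℝ}
    (hd : IsChannel d) : ∑ f : α → β, ∏ u, d (f u) u = 1 := by
  rw [← Fintype.piFinset_univ, ← prod_univ_sum (fun _ => univ) fun u b => d b u,
    prod_eq_one fun u _ => hd.2 u]

end Channels

section MutualInformation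

variable {α β γ δ : Type} [Fintype α] [Fintype β] [Fintype γ] [Fintype δ]

theorem mutInfo_swap (R : α → β → ℝ) : mutInfo (fun b a => R a b) = mutInfo R := by
  have joint : shannonEnt (fun p : β × α => R p.2 p.1) = shannonEnt (fun p : α × β => R p.1 p.2) :=
    congrArg Neg.neg <|
      (Equiv.prodComm β α).sum_comp fun p : α × β => R p.1 p.2 * Real.logb 2 (R p.1 p.2)
  unfold mutInfo
  rw [joint, add_comm (shannonEnt fun b => ∑ a, R a b)]

theorem mutInfo_eq_sum_mul_log_div {R : α → β → ℝ} (hR : ∀ a b, 0 ≤ R a b) :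
    mutInfo R =
      (∑ a, ∑ b, R a b * Real.log (R a b / ((∑ b', R a b') * ∑ a', R a' b))) / Real.log 2 := by
  have split_log : ∀ a b, R a b * Real.log (R a b / ((∑ b', R a b') * ∑ a', R a' b)) =
      R a b * Real.log (R a b) - R a b * Real.log (∑ b', R a b') -
        R a b * Real.log (∑ a', R a' b) := by
    intro a b
    rcases (hR a b).eq_or_lt with h | h
    · simp only [← h, zero_mul, sub_zero]
    have row_pos : 0 < ∑ b', R a b' :=
      h.trans_le (single_le_sum (fun b' _ => hR a b') (mem_univ b))
    have col_pos : 0 < ∑ a', R a' b :=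
      h.trans_le (single_le_sum (f := fun a' => R a' b) (fun a' _ => hR a' b) (mem_univ a))
    rw [Real.log_div h.ne' (mul_pos row_pos col_pos).ne', Real.log_mul row_pos.ne' col_pos.ne']
    ring
  simp only [split_log, sum_sub_distrib, ← sum_mul]
  rw [sum_comm (f := fun a b => R a b * Real.log (∑ a', R a' b))]
  simp only [mutInfo, shannonEnt, Fintype.sum_prod_type, Real.logb, ← sum_mul, ← mul_div_assoc,
    ← sum_div]
  ring

theorem mutInfo_channel_left_le {R : α → β → ℝ} (hR : ∀ a b, 0 ≤ R a b) {c : γ → α → ℝ}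
    (hc : IsChannel c) : mutInfo (fun a' b => ∑ a, c a' a * R a b) ≤ mutInfo R := by
  have row : ∀ a', ∑ b, ∑ a, c a' a * R a b = ∑ a, c a' a * ∑ b, R a b := fun a' => by
    rw [sum_comm]
    simp only [mul_sum]
  have col : ∀ b, ∑ a', ∑ a, c a' a * R a b = ∑ a, R a b := fun b => by
    rw [sum_comm]
    simp only [← sum_mul, hc.2, one_mul]
  have eq_zero_of_marginals : ∀ a b, (∑ b', R a b') * ∑ a', R a' b = 0 → R a b = 0 := by
    intro a b h
    rcases mul_eq_zero.1 h with h | h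
    · exact (sum_eq_zero_iff_of_nonneg fun b' _ => hR a b').1 h b (mem_univ b)
    · exact (sum_eq_zero_iff_of_nonneg fun a' _ => hR a' b).1 h a (mem_univ a)
  have log_sum : ∀ a' b, (∑ a, c a' a * R a b) * Real.log ((∑ a, c a' a * R a b) /
      ((∑ a, c a' a * ∑ b', R a b') * ∑ a, R a b)) ≤
        ∑ a, c a' a * (R a b * Real.log (R a b / ((∑ b', R a b') * ∑ a', R a' b))) := by
    intro a' b
    rw [sum_mul (f := fun a => c a' a * ∑ b', R a b'),
      sum_congr rfl fun a _ => mul_assoc (c a' a) (∑ b', R a b') (∑ a, R a b)]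
    exact sum_mul_log_sum_div_sum_le (fun a _ => hc.1 a' a) (fun a _ => hR a b)
      (fun a _ => mul_nonneg (sum_nonneg fun b' _ => hR a b') (sum_nonneg fun a' _ => hR a' b))
      fun a _ => eq_zero_of_marginals a b
  rw [mutInfo_eq_sum_mul_log_div hR, mutInfo_eq_sum_mul_log_div fun a' b =>
    sum_nonneg fun a _ => mul_nonneg (hc.1 a' a) (hR a b)]
  refine div_le_div_of_nonneg_right ?_ (Real.log_pos one_lt_two).le
  simp only [row, col]
  refine (sum_le_sum fun a' _ => sum_le_sum fun b _ => log_sum a' b).trans_eq ?_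
  rw [sum_congr rfl fun a' _ => sum_comm, sum_comm]
  simp only [← mul_sum, ← sum_mul, hc.2, one_mul]

theorem mutInfo_applyChannels_le {R : α → β → ℝ} (hR : ∀ a b, 0 ≤ R a b) {c : γ → α → ℝ}
    (hc : IsChannel c) {d : δ → β → ℝ} (hd : IsChannel d) :
    mutInfo (applyChannels R c d) ≤ mutInfo R := by
  have factor : applyChannels R c d = fun a' b' => ∑ b, d b' b * ∑ a, c a' a * R a b := by
    ext a' b'
    rw [applyChannels, sum_comm]
    refine sum_congr rfl fun b _ => ?_
    rw [mul_sum]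
    exact sum_congr rfl fun a _ => by ring
  calc mutInfo (applyChannels R c d)
      = mutInfo (fun b' a' => ∑ b, d b' b * ∑ a, c a' a * R a b) := by
        rw [factor, ← mutInfo_swap]
    _ ≤ mutInfo (fun b a' => ∑ a, c a' a * R a b) :=
        mutInfo_channel_left_le (fun b a' => sum_nonneg fun a _ => mul_nonneg (hc.1 a' a) (hR a b))
          hd
    _ = mutInfo (fun a' b => ∑ a, c a' a * R a b) :=
        mutInfo_swap fun a' b => ∑ a, c a' a * R a b
    _ ≤ mutInfo R := mutInfo_channel_left_le hR hc

theorem mutInfo_nonneg {R : α → β → ℝ} (hR : ∀ a b, 0 ≤ R a b) (hR1 : ∑ a, ∑ b, R a b = 1) :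
    0 ≤ mutInfo R := by
  have isChannel_discard {ι : Type} : IsChannel fun (_ : Unit) (_ : ι) => (1 : ℝ) :=
    ⟨fun _ _ => zero_le_one, fun _ => by simp⟩
  have trivial_output := mutInfo_applyChannels_le hR isChannel_discard isChannel_discard
  simpa [mutInfo, shannonEnt, applyChannels, hR1] using trivial_output

end MutualInformation

/-! ### Convexity of the squashed non-locality -/

section Convexity

variable {A B X Y : Type} [Fintype A] [Fintype B]

theorem convex_setOf_isDevice : Convex ℝ {P : A → B → X → Y → ℝ | IsDevice P} := by
  rintro P ⟨hP0, hP1, hPA, hPB⟩ Q ⟨hQ0, hQ1, hQA, hQB⟩ s t hs ht hst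
  refine ⟨fun a b x y => add_nonneg (mul_nonneg hs (hP0 a b x y)) (mul_nonneg ht (hQ0 a b x y)),
    ?_, ?_, ?_⟩ <;>
  simp only [Pi.add_apply, Pi.smul_apply, smul_eq_mul, sum_add_distrib, ← mul_sum]
  · intro x y
    rw [hP1, hQ1, mul_one, mul_one, hst]
  · intro a x y y'
    rw [hPA a x y y', hQA a x y y']
  · intro b y x x'
    rw [hPB b y x x', hQB b y x x']

theorem NsqSet_nonempty {P : A → B → X → Y → ℝ} (hP : IsDevice P) (x : X) (y : Y) :
    (NsqSet P x y).Nonempty :=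
  ⟨_, 1, fun _ => 1, fun _ => P, fun _ => zero_le_one, by simp, fun _ => hP, by simp, rfl⟩

theorem NsqSet_bddBelow (P : A → B → X → Y → ℝ) (x : X) (y : Y) : BddBelow (NsqSet P x y) := by
  refine ⟨0, ?_⟩
  rintro _ ⟨n, p, Pe, hp0, -, hPe, -, rfl⟩
  exact sum_nonneg fun i _ => mul_nonneg (hp0 i)
    (mutInfo_nonneg (fun a b => (hPe i).1 a b x y) ((hPe i).2.1 x y))

open scoped Pointwise in
theorem smul_NsqSet_add_smul_NsqSet_subset (P Q : A → B → X → Y → ℝ) {s t : ℝ} (hs : 0 ≤ s)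
    (ht : 0 ≤ t) (hst : s + t = 1) (x : X) (y : Y) :
    s • NsqSet P x y + t • NsqSet Q x y ⊆ NsqSet (s • P + t • Q) x y := by
  rintro _ ⟨_, ⟨_, ⟨n, p, Pe, hp0, hp1, hPe, hP, rfl⟩, rfl⟩,
    _, ⟨_, ⟨m, q, Qe, hq0, hq1, hQe, hQ, rfl⟩, rfl⟩, rfl⟩
  refine ⟨n + m, Fin.append (s • p) (t • q), Fin.append Pe Qe, ?_, ?_, ?_, ?_, ?_⟩
  · simp only [Fin.forall_fin_add, Fin.append_left, Fin.append_right]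
    exact ⟨fun i => mul_nonneg hs (hp0 i), fun i => mul_nonneg ht (hq0 i)⟩
  · simp only [Fin.sum_univ_add, Fin.append_left, Fin.append_right, Pi.smul_apply, smul_eq_mul,
      ← mul_sum, hp1, hq1, mul_one, hst]
  · simp only [Fin.forall_fin_add, Fin.append_left, Fin.append_right]
    exact ⟨hPe, hQe⟩
  · intro a b x' y'
    simp only [Fin.sum_univ_add, Fin.append_left, Fin.append_right, Pi.smul_apply, Pi.add_apply,
      smul_eq_mul, mul_assoc, ← mul_sum, hP, hQ]
  · simp only [Fin.sum_univ_add, Fin.append_left, Fin.append_right, Pi.smul_apply, smul_eq_mul,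
      mul_assoc, ← mul_sum]

/-- The squashed mutual information of the outputs at the fixed inputs `(x, y)`; the squashed
non-locality is its maximum over the inputs. -/
noncomputable def squashedMutInfo (P : A → B → X → Y → ℝ) (x : X) (y : Y) : ℝ :=
  sInf (NsqSet P x y)

theorem convexOn_squashedMutInfo (x : X) (y : Y) :
    ConvexOn ℝ {P : A → B → X → Y → ℝ | IsDevice P} fun P => squashedMutInfo P x y := by
  refine ⟨convex_setOf_isDevice, fun P hP Q hQ s t hs ht hst => ?_⟩
  have hPne := NsqSet_nonempty hP x y
  have hQne := NsqSet_nonempty hQ x y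
  simp only [squashedMutInfo]
  rw [← Real.sInf_smul_of_nonneg hs, ← Real.sInf_smul_of_nonneg ht,
    ← csInf_add hPne.smul_set ((NsqSet_bddBelow P x y).smul_of_nonneg hs)
      hQne.smul_set ((NsqSet_bddBelow Q x y).smul_of_nonneg ht)]
  exact csInf_le_csInf (NsqSet_bddBelow _ x y) (hPne.smul_set.add hQne.smul_set)
    (smul_NsqSet_add_smul_NsqSet_subset P Q hs ht hst x y)

variable [Fintype X] [Fintype Y] [Nonempty X] [Nonempty Y]

theorem Nsq_le_iff {P : A → B → X → Y → ℝ} {t : ℝ} :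
    Nsq P ≤ t ↔ ∀ x y, squashedMutInfo P x y ≤ t := by
  simp only [Nsq, squashedMutInfo, sup'_le_iff, mem_univ, true_imp_iff, Prod.forall]

theorem squashedMutInfo_le_Nsq (P : A → B → X → Y → ℝ) (x : X) (y : Y) :
    squashedMutInfo P x y ≤ Nsq P :=
  Nsq_le_iff.1 le_rfl x y

theorem convexOn_Nsq : ConvexOn ℝ {P : A → B → X → Y → ℝ | IsDevice P} Nsq :=
  ⟨convex_setOf_isDevice, fun P hP Q hQ _ _ hs ht hst => Nsq_le_iff.2 fun x y =>
    ((convexOn_squashedMutInfo x y).2 hP hQ hs ht hst).trans <|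
      add_le_add (smul_le_smul_of_nonneg_left (squashedMutInfo_le_Nsq P x y) hs)
        (smul_le_smul_of_nonneg_left (squashedMutInfo_le_Nsq Q x y) ht)⟩

end Convexity

/-! ### Elementary local operations -/

section Relabelling

variable {X' Y' A B X Y : Type}

/-- The device that feeds `f x'` and `g y'` into `P` when its own inputs are `x'` and `y'`. -/
def relabelInputs (P : A → B → X → Y → ℝ) (f : X' → X) (g : Y' → Y) : A → B → X' → Y' → ℝ :=
  fun a b x' y' => P a b (f x') (g y')

variable [Fintype A] [Fintype B] {P : A → B → X → Y → ℝ}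

theorem IsDevice.relabelInputs (hP : IsDevice P) (f : X' → X) (g : Y' → Y) :
    IsDevice (relabelInputs P f g) :=
  ⟨fun a b _ _ => hP.1 a b _ _, fun _ _ => hP.2.1 _ _, fun a _ _ _ => hP.2.2.1 a _ _ _,
    fun b _ _ _ => hP.2.2.2 b _ _ _⟩

theorem squashedMutInfo_relabelInputs_le (hP : IsDevice P) (f : X' → X) (g : Y' → Y) (x' : X')
    (y' : Y') : squashedMutInfo (relabelInputs P f g) x' y' ≤ squashedMutInfo P (f x') (g y') := by
  refine csInf_le_csInf (NsqSet_bddBelow _ x' y') (NsqSet_nonempty hP _ _) ?_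
  rintro _ ⟨n, p, Pe, hp0, hp1, hPe, hsum, rfl⟩
  exact ⟨n, p, fun i => relabelInputs (Pe i) f g, hp0, hp1, fun i => (hPe i).relabelInputs f g,
    fun a b _ _ => hsum a b _ _, rfl⟩

theorem Nsq_relabelInputs_le [Fintype X] [Fintype Y] [Nonempty X] [Nonempty Y] [Fintype X']
    [Fintype Y'] [Nonempty X'] [Nonempty Y'] (hP : IsDevice P) (f : X' → X) (g : Y' → Y) :
    Nsq (relabelInputs P f g) ≤ Nsq P :=
  Nsq_le_iff.2 fun x' y' =>
    (squashedMutInfo_relabelInputs_le hP f g x' y').trans (squashedMutInfo_le_Nsq P _ _)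

/-- The device that rolls the product dice `d1(x|x') d2(y|y')` to choose the inputs of `P`. -/
def rollInputs [Fintype X] [Fintype Y] (P : A → B → X → Y → ℝ) (d1 : X → X' → ℝ)
    (d2 : Y → Y' → ℝ) : A → B → X' → Y' → ℝ :=
  fun a b x' y' => ∑ x, ∑ y, d1 x x' * d2 y y' * P a b x y

end Relabelling

theorem rollInputs_mem_convexHull {A B X Y X' Y' : Type} [Fintype X] [Fintype Y] [Finite X']
    [Finite Y'] (P : A → B → X → Y → ℝ) {d1 : X → X' → ℝ} (hd1 : IsChannel d1)
    {d2 : Y → Y' → ℝ} (hd2 : IsChannel d2) :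
    rollInputs P d1 d2 ∈ convexHull ℝ
      (Set.range fun fg : (X' → X) × (Y' → Y) => relabelInputs P fg.1 fg.2) := by
  classical
  cases nonempty_fintype X'
  cases nonempty_fintype Y'
  have mixture : rollInputs P d1 d2 = ∑ fg : (X' → X) × (Y' → Y),
      ((∏ u, d1 (fg.1 u) u) * ∏ v, d2 (fg.2 v) v) • relabelInputs P fg.1 fg.2 := by
    ext a b x' y'
    have average_second (x : X) :
        ∑ g : Y' → Y, (∏ v, d2 (g v) v) * P a b x (g y') = ∑ y, d2 y y' * P a b x y :=
      hd2.sum_prod_mul_apply (P a b x) y'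
    simp only [Finset.sum_apply, Pi.smul_apply, smul_eq_mul, relabelInputs, rollInputs,
      Fintype.sum_prod_type, mul_assoc, ← mul_sum, average_second]
    exact (hd1.sum_prod_mul_apply (fun x => ∑ y, d2 y y' * P a b x y) x').symm
  rw [mixture]
  refine (convex_convexHull ℝ _).sum_mem (fun fg _ => ?_) ?_
    fun fg _ => subset_convexHull ℝ _ ⟨fg, rfl⟩
  · exact mul_nonneg (prod_nonneg fun u _ => hd1.1 _ u) (prod_nonneg fun v _ => hd2.1 _ v)
  · simp only [Fintype.sum_prod_type]
    rw [← sum_mul_sum, hd1.sum_prod_eq_one, hd2.sum_prod_eq_one, one_mul]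

section PostProcessing

variable {A B A' B' X Y : Type} [Fintype A] [Fintype B]

/-- The device whose outputs are those of `P`, sent through the channels `c(·|·,x)` and
`d(·|·,y)`. -/
def postprocess (P : A → B → X → Y → ℝ) (c : A' → A → X → ℝ) (d : B' → B → Y → ℝ) :
    A' → B' → X → Y → ℝ :=
  fun a' b' x y => applyChannels (fun a b => P a b x y) (fun a' a => c a' a x)
    (fun b' b => d b' b y) a' b'

variable [Fintype A'] [Fintype B'] {P : A → B → X → Y → ℝ} {c : A' → A → X → ℝ}
  {d : B' → B → Y → ℝ}

theorem IsDevice.postprocess (hP : IsDevice P) (hc : ∀ x, IsChannel fun a' a => c a' a x)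
    (hd : ∀ y, IsChannel fun b' b => d b' b y) : IsDevice (postprocess P c d) := by
  refine ⟨fun a' b' x y => applyChannels_nonneg (fun a b => hP.1 a b x y) (hc x) (hd y) a' b',
    fun x y => (sum_sum_applyChannels _ (hc x) (hd y)).trans (hP.2.1 x y),
    fun a' x y y' => ?_, fun b' y x x' => ?_⟩
  · simp only [_root_.postprocess, sum_applyChannels_right _ _ (hd _), hP.2.2.1 _ x y y']
  · simp only [_root_.postprocess, sum_applyChannels_left _ (hc _), hP.2.2.2 _ y x x']

theorem squashedMutInfo_postprocess_le (hP : IsDevice P)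
    (hc : ∀ x, IsChannel fun a' a => c a' a x) (hd : ∀ y, IsChannel fun b' b => d b' b y)
    (x : X) (y : Y) : squashedMutInfo (postprocess P c d) x y ≤ squashedMutInfo P x y := by
  refine le_csInf (NsqSet_nonempty hP x y) ?_
  rintro _ ⟨n, p, Pe, hp0, hp1, hPe, hsum, rfl⟩
  calc squashedMutInfo (postprocess P c d) x y
      ≤ ∑ i, p i * mutInfo (fun a' b' => postprocess (Pe i) c d a' b' x y) :=
        csInf_le (NsqSet_bddBelow _ x y) ⟨n, p, fun i => postprocess (Pe i) c d, hp0, hp1,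
          fun i => (hPe i).postprocess hc hd,
          fun a' b' x y => by simp only [postprocess, sum_mul_applyChannels, hsum], rfl⟩
    _ ≤ ∑ i, p i * mutInfo (fun a b => Pe i a b x y) :=
        sum_le_sum fun i _ => mul_le_mul_of_nonneg_left
          (mutInfo_applyChannels_le (fun a b => (hPe i).1 a b x y) (hc x) (hd y)) (hp0 i)

theorem Nsq_postprocess_le [Fintype X] [Fintype Y] [Nonempty X] [Nonempty Y] (hP : IsDevice P)
    (hc : ∀ x, IsChannel fun a' a => c a' a x) (hd : ∀ y, IsChannel fun b' b => d b' b y) :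
    Nsq (postprocess P c d) ≤ Nsq P :=
  Nsq_le_iff.2 fun x y =>
    (squashedMutInfo_postprocess_le hP hc hd x y).trans (squashedMutInfo_le_Nsq P x y)

end PostProcessing

theorem GMDLOPCout_eq_sum {A B X Y A' B' X' Y' : Type} [Fintype A] [Fintype B] [Fintype X]
    [Fintype Y] {n1 n2 : ℕ} (P : A → B → X → Y → ℝ) (mu : Fin n1 → ℝ) (nu : Fin n2 → ℝ)
    (D1 : X → X' → Fin n1 → ℝ) (D2 : Y → Y' → Fin n1 → ℝ)
    (PC1 : A' → A → X → Fin n2 → ℝ) (PC2 : B' → B → Y → Fin n2 → ℝ) :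
    GMDLOPCout P mu nu D1 D2 PC1 PC2 = ∑ l1, mu l1 •
      rollInputs
        (∑ l2, nu l2 • postprocess P (fun a' a x => PC1 a' a x l2) fun b' b y => PC2 b' b y l2)
        (fun x x' => D1 x x' l1) fun y y' => D2 y y' l1 := by
  ext a' b' x' y'
  have postprocessing : ∀ x y,
      ∑ a, ∑ b, P a b x y * (∑ l2, nu l2 * PC1 a' a x l2 * PC2 b' b y l2) =
        (∑ l2, nu l2 • postprocess P (fun a' a x => PC1 a' a x l2)
          fun b' b y => PC2 b' b y l2) a' b' x y := by
    intro x y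
    simp only [Finset.sum_apply, Pi.smul_apply, smul_eq_mul, postprocess, applyChannels, mul_sum]
    rw [sum_comm (s := (univ : Finset (Fin n2)))]
    refine sum_congr rfl fun a _ => ?_
    rw [sum_comm]
    exact sum_congr rfl fun l2 _ => sum_congr rfl fun b _ => by ring
  simp only [GMDLOPCout, postprocessing]
  generalize ∑ l2, nu l2 • postprocess P (fun a' a x => PC1 a' a x l2)
    (fun b' b y => PC2 b' b y l2) = Q
  simp only [Finset.sum_apply, Pi.smul_apply, smul_eq_mul, rollInputs, mul_sum, sum_mul]
  rw [sum_comm (s := (univ : Finset (Fin n1)))]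
  refine sum_congr rfl fun x _ => ?_
  rw [sum_comm]
  exact sum_congr rfl fun l1 _ => sum_congr rfl fun y _ => by ring

/-- Monotonicity of the squashed non-locality under GMDLOPC operations: the output of a
GMDLOPC operation is again a bipartite non-signaling device, and its squashed
non-locality does not exceed that of the input device. -/
theorem Nsq_monotone_GMDLOPC {A B X Y A' B' X' Y' : Type}
    [Fintype A] [Fintype B] [Fintype X] [Fintype Y]
    [Fintype A'] [Fintype B'] [Fintype X'] [Fintype Y']
    [Nonempty X] [Nonempty Y] [Nonempty X'] [Nonempty Y']
    (P : A → B → X → Y → ℝ) (hP : IsDevice P)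
    {n1 n2 : ℕ}
    (mu : Fin n1 → ℝ) (hmu0 : ∀ l1, 0 ≤ mu l1) (hmu1 : ∑ l1, mu l1 = 1)
    (nu : Fin n2 → ℝ) (hnu0 : ∀ l2, 0 ≤ nu l2) (hnu1 : ∑ l2, nu l2 = 1)
    (D1 : X → X' → Fin n1 → ℝ) (hD10 : ∀ x x' l1, 0 ≤ D1 x x' l1)
    (hD11 : ∀ x' l1, ∑ x, D1 x x' l1 = 1)
    (D2 : Y → Y' → Fin n1 → ℝ) (hD20 : ∀ y y' l1, 0 ≤ D2 y y' l1)
    (hD21 : ∀ y' l1, ∑ y, D2 y y' l1 = 1)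
    (PC1 : A' → A → X → Fin n2 → ℝ) (hPC10 : ∀ a' a x l2, 0 ≤ PC1 a' a x l2)
    (hPC11 : ∀ a x l2, ∑ a', PC1 a' a x l2 = 1)
    (PC2 : B' → B → Y → Fin n2 → ℝ) (hPC20 : ∀ b' b y l2, 0 ≤ PC2 b' b y l2)
    (hPC21 : ∀ b y l2, ∑ b', PC2 b' b y l2 = 1) :
    IsDevice (GMDLOPCout P mu nu D1 D2 PC1 PC2) ∧
      Nsq (GMDLOPCout P mu nu D1 D2 PC1 PC2) ≤ Nsq P := by
  have processed := (convexOn_Nsq.convex_le (Nsq P)).sum_mem (fun l2 _ => hnu0 l2) hnu1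
    fun l2 _ =>
      have hc (x : X) : IsChannel fun a' a => PC1 a' a x l2 :=
        ⟨fun a' a => hPC10 a' a x l2, fun a => hPC11 a x l2⟩
      have hd (y : Y) : IsChannel fun b' b => PC2 b' b y l2 :=
        ⟨fun b' b => hPC20 b' b y l2, fun b => hPC21 b y l2⟩
      ⟨hP.postprocess hc hd, Nsq_postprocess_le hP hc hd⟩
  have convex_target := convexOn_Nsq (A := A') (B := B') (X := X') (Y := Y').convex_le (Nsq P)
  rw [GMDLOPCout_eq_sum]
  refine convex_target.sum_mem (fun l1 _ => hmu0 l1) hmu1 fun l1 _ => ?_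
  refine convexHull_min (Set.range_subset_iff.2 fun fg => ?_) convex_target
    (rollInputs_mem_convexHull _ ⟨fun x x' => hD10 x x' l1, fun x' => hD11 x' l1⟩
      ⟨fun y y' => hD20 y y' l1, fun y' => hD21 y' l1⟩)
  exact ⟨processed.1.relabelInputs fg.1 fg.2,
    (Nsq_relabelInputs_le processed.1 fg.1 fg.2).trans processed.2⟩
end
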